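/- Let n = 56 and let x, y ∈ S_56 be the permutations given in the context, with z = (x·y)⁻¹. Then (x, y, z) is a nice triple; the cycle types of x, y, z are 4^12·2^2, 8^6·4^1·2^2 and 2^25 respectively; and the subgroup ⟨x, y⟩ of S_56 has cardinality 80640 (the order of the normalizer of PSL(3,4) in S_56, which is PSL(3,4):2^2). -/

import Mathlib

/-- `permInd s` = (sum of the cycle type of `s`) − (number of entries of the cycle type of `s`),
i.e. `n` minus the number of cycles of `s` when fixed points are counted as cycles. -/
def permInd {n : ℕ} (s : Equiv.Perm (Fin n)) : ℕ :=
  s.cycleType.sum - Multiset.card s.cycleType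

/-- A `MulAction` is preprimitive if it is pretransitive and every block is trivial. -/
def IsPreprimitive (G : Type*) (X : Type*) [Group G] [MulAction G X] : Prop :=
  MulAction.IsPretransitive G X ∧
    ∀ B : Set X, MulAction.IsBlock G B → MulAction.IsTrivialBlock B

/-- A triple `(x, y, z)` of permutations in `S_n` is *nice*:
(i) `x * y * z = 1`; (ii) `G = ⟨x, y⟩` is neither the alternating nor the symmetric group;
(iii) `G` acts primitively on `Fin n` and is almost simple; (iv) the triple has genus 0;
(v) the triple is rigid in `G`; (vi) `x`, `y`, `z` lie in rational conjugacy classes of `G`. -/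
def IsNice {n : ℕ} (x y z : Equiv.Perm (Fin n)) : Prop :=
  x * y * z = 1 ∧
  (Subgroup.closure {x, y} ≠ alternatingGroup (Fin n) ∧
    Subgroup.closure {x, y} ≠ ⊤) ∧
  IsPreprimitive (Subgroup.closure {x, y}) (Fin n) ∧
  (∃ S : Subgroup (Subgroup.closure {x, y}), S.Normal ∧ IsSimpleGroup S ∧
    (∃ a b : S, a * b ≠ b * a) ∧
    Subgroup.centralizer (S : Set (Subgroup.closure {x, y})) = ⊥) ∧
  permInd x + permInd y + permInd z = 2 * (n - 1) ∧
  (∀ x' y' z' : Equiv.Perm (Fin n),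
    x' * y' * z' = 1 →
    Subgroup.closure {x', y'} = Subgroup.closure {x, y} →
    (∃ g ∈ Subgroup.closure {x, y}, g * x * g⁻¹ = x') →
    (∃ g ∈ Subgroup.closure {x, y}, g * y * g⁻¹ = y') →
    (∃ g ∈ Subgroup.closure {x, y}, g * z * g⁻¹ = z') →
    ∃ g ∈ Subgroup.closure {x, y},
      g * x * g⁻¹ = x' ∧ g * y * g⁻¹ = y' ∧ g * z * g⁻¹ = z') ∧
  ∀ g ∈ ({x, y, z} : Set (Equiv.Perm (Fin n))), ∀ k : ℤ,
    Int.gcd k (orderOf g) = 1 →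
    ∃ h ∈ Subgroup.closure {x, y}, h * g * h⁻¹ = g ^ k

/-- The permutation given by a list of (disjoint) cycles, each written as a list of points. -/
def permOfCycles {n : ℕ} (cs : List (List (Fin n))) : Equiv.Perm (Fin n) :=
  (cs.map List.formPerm).prod

def x : Equiv.Perm (Fin 56) := permOfCycles [
  [1, 36, 2, 5],
  [3, 47],
  [7, 45, 33, 22],
  [8, 31, 55, 14],
  [9, 21, 50, 48],
  [10, 16, 40, 39],
  [11, 54],
  [12, 19, 49, 23],
  [13, 41, 42, 15],
  [17, 56, 24, 30],
  [18, 53, 44, 25],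
  [20, 52, 28, 35],
  [26, 29, 46, 37],
  [27, 34, 51, 43]]

def y : Equiv.Perm (Fin 56) := permOfCycles [
  [1, 27, 36, 32],
  [2, 43, 50, 14, 52, 17, 30, 54],
  [3, 38, 47, 29, 33, 53, 16, 46],
  [4, 7, 22, 26, 28, 55, 44, 45],
  [5, 11, 24, 56, 20, 12, 41, 34],
  [6, 40, 18, 19, 35, 37, 10, 39],
  [8, 21],
  [9, 48, 51, 13, 15, 49, 25, 31],
  [23, 42]]

namespace Deg56

/-! ### Permutations of 56 points coded as natural numbers in base 64 -/

/-- The image of the point `i` under the permutation with code `c`. -/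
def ap (c i : ℕ) : ℕ := Nat.land (Nat.shiftRight c (Nat.mul 6 i)) 63

def tabf (f : ℕ → ℕ) : List ℕ → ℕ
  | [] => 0
  | i :: l => Nat.add (f i) (Nat.mul 64 (tabf f l))

def idx : List ℕ := [0, 1, 2, 3, 4, 5, 6, 7, 8, 9, 10, 11, 12, 13, 14, 15, 16, 17, 18, 19, 20, 21,
  22, 23, 24, 25, 26, 27, 28, 29, 30, 31, 32, 33, 34, 35, 36, 37, 38, 39, 40, 41, 42, 43, 44, 45,
  46, 47, 48, 49, 50, 51, 52, 53, 54, 55]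

/-- Code of the product. -/
def comp (a b : ℕ) : ℕ := tabf (fun i => ap a (ap b i)) idx

/-- Code of the product of three factors. -/
def comp3 (a b c : ℕ) : ℕ := tabf (fun i => ap a (ap b (ap c i))) idx

/-- Evaluate `n` before passing it to `k`. -/
def force {α : Type} (n : ℕ) (k : ℕ → α) : α := Nat.rec (k 0) (fun m _ => k (Nat.succ m)) n

theorem force_eq {α : Type} (n : ℕ) (k : ℕ → α) : force n k = k n := by
  cases n <;> rfl

theorem ap_eq (c i : ℕ) : ap c i = c / 64 ^ i % 64 := by
  have h1 : Nat.shiftRight c (Nat.mul 6 i) = c >>> (6 * i) := rfl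
  have h2 : ∀ a, Nat.land a 63 = a &&& (2 ^ 6 - 1) := fun _ => rfl
  rw [ap, h1, h2, Nat.and_two_pow_sub_one_eq_mod, Nat.shiftRight_eq_div_pow, pow_mul]
  norm_num

theorem ap_lt (c i : ℕ) : ap c i < 64 := by
  rw [ap_eq]; exact Nat.mod_lt _ (by norm_num)

theorem ap_tabf (f : ℕ → ℕ) (hf : ∀ i, f i < 64) (l : List ℕ) (j : ℕ) (hj : j < l.length) :
    ap (tabf f l) j = f l[j] := by
  induction l generalizing j with
  | nil => simp at hj
  | cons a l ih =>
    have h : tabf f (a :: l) = f a + 64 * tabf f l := rfl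
    have ha := hf a
    cases j with
    | zero =>
      rw [h, ap_eq]
      simp only [pow_zero, Nat.div_one, List.getElem_cons_zero]
      omega
    | succ j =>
      have h1 := ih j (by simpa using hj)
      rw [ap_eq] at h1
      rw [h, ap_eq, pow_succ', ← Nat.div_div_eq_div_mul,
        show (f a + 64 * tabf f l) / 64 = tabf f l by omega, h1]
      rfl

theorem idx_eq : idx = List.range 56 := by decide +kernel

theorem mem_idx {i : ℕ} : i ∈ idx ↔ i < 56 := by rw [idx_eq, List.mem_range]

theorem ap_tab (f : ℕ → ℕ) (hf : ∀ i, f i < 64) (j : ℕ) (hj : j < 56) :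
    ap (tabf f idx) j = f j := by
  rw [idx_eq, ap_tabf f hf _ j (by simpa using hj)]
  simp

/-- The permutation `g` has code `c`. -/
def Rep (c : ℕ) (g : Equiv.Perm (Fin 56)) : Prop := ∀ i : Fin 56, ap c i = (g i : ℕ)

theorem Rep.mul {a b : ℕ} {g h : Equiv.Perm (Fin 56)} (hg : Rep a g) (hh : Rep b h) :
    Rep (comp a b) (g * h) := fun i => by
  rw [comp, ap_tab _ (fun _ => ap_lt _ _) _ i.2, hh i, hg]; rfl

theorem Rep.mul3 {a b c : ℕ} {g h k : Equiv.Perm (Fin 56)} (hg : Rep a g) (hh : Rep b h)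
    (hk : Rep c k) : Rep (comp3 a b c) (g * h * k) := fun i => by
  rw [comp3, ap_tab _ (fun _ => ap_lt _ _) _ i.2, hk i, hh, hg]; rfl

theorem Rep.inj {a : ℕ} {g h : Equiv.Perm (Fin 56)} (hg : Rep a g) (hh : Rep a h) : g = h := by
  ext i; rw [← hg i, ← hh i]

def cid : ℕ := tabf (fun i => i % 64) idx

theorem rep_one : Rep cid 1 := fun i => by
  rw [cid, ap_tab _ (fun _ => Nat.mod_lt _ (by norm_num)) _ i.2]
  have := i.2
  simp only [Equiv.Perm.coe_one, id]
  omega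

theorem Rep.inv {a b : ℕ} {g : Equiv.Perm (Fin 56)} (hg : Rep a g)
    (h : ∀ i : Fin 56, ap a (ap b i) = i ∧ ap b i < 56) : Rep b g⁻¹ := fun i => by
  have h1 := h i
  have h2 := hg ⟨ap b i, h1.2⟩
  simp only [h1.1] at h2
  have h3 : g ⟨ap b i, h1.2⟩ = i := Fin.ext h2.symm
  rw [Equiv.Perm.inv_eq_iff_eq.2 h3.symm]

def cx : ℕ := 0x38bb1caf05c90e58596cfaa72a66825335a0dd1ba389d49e307cb4c75028348a53d9055fb46044bc5918
def cxi : ℕ := 0x7cb4948954f20dd1f5ce9350a26b8171bb602186b4ae5b00c6126331978aab73d7da7c0e586084be4151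
def cy : ℕ := 0xb0241134e67374312dc978921af2a0945d4127687791c7c0a9a20c8d37aec743e9627c155a82c79ab6d4
def cyi : ℕ := 0x71e84ec2b3c9990b370973062838db4e9764651bda056c4ba872004a8d35372cd41657d51278adbb6818
def cz : ℕ := 0x645a00a484abbaf121c0ccf5183420681b2454b58e0a3dd83dd7d35314655dc36a78a2721e7dad99b8b4

theorem rep_x : Rep cx x := by unfold Rep; decide +kernel
theorem rep_y : Rep cy y := by unfold Rep; decide +kernel
theorem rep_xi : Rep cxi x⁻¹ := rep_x.inv (by decide +kernel)
theorem rep_yi : Rep cyi y⁻¹ := rep_y.inv (by decide +kernel)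
theorem rep_z : Rep cz (x * y)⁻¹ := (rep_x.mul rep_y).inv (by decide +kernel)

/-! ### Words in `x` and `y` -/

abbrev G : Subgroup (Equiv.Perm (Fin 56)) := Subgroup.closure {x, y}

theorem x_mem : x ∈ G := Subgroup.subset_closure (by simp)
theorem y_mem : y ∈ G := Subgroup.subset_closure (by simp)

def wp : List ℕ → Equiv.Perm (Fin 56)
  | [] => 1
  | 0 :: w => x * wp w
  | (_ + 1) :: w => y * wp w

def wc : List ℕ → ℕ
  | [] => cid
  | 0 :: w => force (wc w) (comp cx)
  | (_ + 1) :: w => force (wc w) (comp cy)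

theorem wp_mem (w : List ℕ) : wp w ∈ G := by
  induction w with
  | nil => exact G.one_mem
  | cons a w ih =>
    cases a with
    | zero => exact G.mul_mem x_mem ih
    | succ a => exact G.mul_mem y_mem ih

theorem rep_wp (w : List ℕ) : Rep (wc w) (wp w) := by
  induction w with
  | nil => exact rep_one
  | cons a w ih =>
    cases a with
    | zero => rw [wc, force_eq]; exact rep_x.mul ih
    | succ a => rw [wc, force_eq]; exact rep_y.mul ih

/-! ### Closure of a list under two maps -/

def mem (a : ℕ) : List ℕ → Bool
  | [] => false
  | b :: l => cond (Nat.beq a b) true (mem a l)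

theorem mem_iff {a : ℕ} {l : List ℕ} : mem a l = true ↔ a ∈ l := by
  induction l with
  | nil => simp [mem]
  | cons b l ih =>
    rw [mem, List.mem_cons, ← ih]
    cases h : Nat.beq a b
    · have := Nat.ne_of_beq_eq_false h
      simp [this]
    · have := Nat.eq_of_beq_eq_true h
      simp [this]

def push (a : ℕ) (q s : List ℕ) (k : List ℕ → List ℕ → Bool) : Bool :=
  cond (mem a s) (k q s) (k (a :: q) (a :: s))

def dfs (f g : ℕ → ℕ) (ok : ℕ → Bool) (fin : List ℕ → Bool) : ℕ → List ℕ → List ℕ → Bool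
  | 0, _, _ => false
  | _ + 1, [], s => fin s
  | n + 1, k :: q, s => force (f k) fun a => force (g k) fun b =>
      cond (ok k) (push a q s fun q s => push b q s fun q s => dfs f g ok fin n q s) false

theorem push_spec {a : ℕ} {q s : List ℕ} {k : List ℕ → List ℕ → Bool}
    (h : push a q s k = true) : ∃ q' s', k q' s' = true ∧ a ∈ s' ∧ s ⊆ s' ∧ q ⊆ q' ∧
      (∀ b ∈ s', b ∈ s ∨ b = a ∧ b ∈ q') ∧ (∀ b ∈ q', b ∈ q ∨ b = a) := by
  unfold push at h
  cases hm : mem a s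
  · rw [hm] at h
    refine ⟨a :: q, a :: s, h, by simp, by simp, by simp, ?_, ?_⟩
    · intro b hb
      rcases List.mem_cons.1 hb with rfl | hb
      · exact Or.inr ⟨rfl, by simp⟩
      · exact Or.inl hb
    · intro b hb
      rcases List.mem_cons.1 hb with rfl | hb
      · exact Or.inr rfl
      · exact Or.inl hb
  · rw [hm] at h
    exact ⟨q, s, h, mem_iff.1 hm, by simp, by simp, fun b hb => Or.inl hb, fun b hb => Or.inl hb⟩

theorem dfs_spec (f g : ℕ → ℕ) (ok : ℕ → Bool) (fin : List ℕ → Bool) (P : ℕ → Prop)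
    (hP : ∀ k, P k → P (f k) ∧ P (g k)) (n : ℕ) : ∀ q s : List ℕ, (∀ k ∈ q, k ∈ s) →
    (∀ k ∈ s, P k) → (∀ k ∈ s, k ∈ q ∨ (ok k = true ∧ f k ∈ s ∧ g k ∈ s)) →
    dfs f g ok fin n q s = true →
    ∃ K : List ℕ, s ⊆ K ∧ (∀ k ∈ K, P k ∧ ok k = true ∧ f k ∈ K ∧ g k ∈ K) ∧ fin K = true := by
  induction n with
  | zero => intro q s _ _ _ h; simp [dfs] at h
  | succ n ih =>
    intro q s hq hs hc h
    cases q with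
    | nil =>
      exact ⟨s, fun _ h => h, fun k hk => ⟨hs k hk, by simpa using hc k hk⟩, h⟩
    | cons k q =>
      rw [dfs, force_eq, force_eq] at h
      cases hok : ok k
      · rw [hok] at h; simp at h
      rw [hok, cond_true] at h
      obtain ⟨q1, s1, h1, ha1, hss1, hqq1, hs1, hq1⟩ := push_spec h
      obtain ⟨q2, s2, h2, ha2, hss2, hqq2, hs2, hq2⟩ := push_spec h1
      have hk : k ∈ s := hq k (by simp)
      have hPk := hP k (hs k hk)
      suffices hh : _ ∧ _ ∧ _ by
        obtain ⟨K, hK1, hK2⟩ := ih q2 s2 hh.1 hh.2.1 hh.2.2 h2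
        exact ⟨K, fun c hc => hK1 (hss2 (hss1 hc)), hK2⟩
      refine ⟨?_, ?_, ?_⟩
      · intro c hc
        rcases hq2 c hc with hc | rfl
        · rcases hq1 c hc with hc | rfl
          · exact hss2 (hss1 (hq c (by simp [hc])))
          · exact hss2 ha1
        · exact ha2
      · intro c hc
        rcases hs2 c hc with hc | ⟨rfl, -⟩
        · rcases hs1 c hc with hc | ⟨rfl, -⟩
          · exact hs c hc
          · exact hPk.1
        · exact hPk.2
      · intro c hc'
        rcases hs2 c hc' with hc' | ⟨rfl, h⟩
        · rcases hs1 c hc' with hc' | ⟨rfl, h⟩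
          · rcases hc c hc' with hc' | ⟨h1, h2, h3⟩
            · rcases List.mem_cons.1 hc' with rfl | hc'
              · exact Or.inr ⟨hok, hss2 ha1, ha2⟩
              · exact Or.inl (hqq2 (hqq1 hc'))
            · exact Or.inr ⟨h1, hss2 (hss1 h2), hss2 (hss1 h3)⟩
          · exact Or.inl (hqq2 h)
        · exact Or.inl h

def tt (_ : ℕ) : Bool := true

def subs (c K : List ℕ) : Bool := c.all fun q => mem q K

/-- All points of `c` are reachable from `p` under the permutations coded by `a` and `b`. -/
def reach (a b p : ℕ) (c : List ℕ) : Bool := dfs (ap a) (ap b) tt (subs c) 60 [p] [p]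

theorem reach_spec {a b p : ℕ} {c : List ℕ} (h : reach a b p c = true) (P : ℕ → Prop)
    (hP : ∀ k, P k → P (ap a k) ∧ P (ap b k)) (hp : P p) : ∀ k ∈ c, P k := by
  obtain ⟨K, -, h1, h2⟩ := dfs_spec (ap a) (ap b) tt (subs c) P hP 60 [p] [p] (by simp)
    (by simpa using hp) (by simp) h
  intro k hk
  exact (h1 k (mem_iff.1 (List.all_eq_true.1 h2 k hk))).1

/-! ### The Gewirtz graph, and the order of `G` -/

def RR : ℕ := 0x100082089060301823020208820046b0c3000000001420102041109003100000682252000008811894100022880406085d01104810020404001025010048930104000084ca0280030008034480944aa081000002000820320202300100410e018117200020882021029800004404112001810a000039800402065020051423040120101024020850c084001a210014420800821041042030084009a0004091044100018101000760700801402142000804c08003320e000c000541004208421810c02000412104144040200015a82840800100824045086000108401880c00c802600051001a00205002a080068400c0800064540049001228260008040121042a1001800003c2120800802448038000a840026000440384c00080308109002411001311200032800401c0810102402e000c0024444000400220e80e0008a200014880280520048401401a040a8000402c0840084804205204300600280484801c0c100000007c10001a40010a088014308000a000721000d00800921080218809e8c5000000000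

def adj (p q : ℕ) : ℕ := Nat.land (Nat.shiftRight RR (Nat.add (Nat.mul 56 p) q)) 1

def pres (c : ℕ) : Bool :=
  idx.all fun p => idx.all fun q => Nat.beq (adj (ap c p) (ap c q)) (adj p q)

theorem pres_x : pres cx = true := by decide +kernel
theorem pres_y : pres cy = true := by decide +kernel

theorem pres_spec {c : ℕ} (h : pres c = true) {g : Equiv.Perm (Fin 56)} (hg : Rep c g)
    (p q : Fin 56) : adj (g p) (g q) = adj p q := by
  have := List.all_eq_true.1 (List.all_eq_true.1 h p (mem_idx.2 p.2)) q (mem_idx.2 q.2)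
  rw [hg, hg] at this
  exact Nat.eq_of_beq_eq_true this

theorem adj_G {g : Equiv.Perm (Fin 56)} (hg : g ∈ G) :
    ∀ p q : Fin 56, adj (g p) (g q) = adj p q := by
  induction hg using Subgroup.closure_induction with
  | mem g hg =>
    rcases hg with rfl | hg
    · exact pres_spec pres_x rep_x
    · rw [Set.mem_singleton_iff.1 hg]; exact pres_spec pres_y rep_y
  | one => intro p q; rfl
  | mul a b _ _ ha hb => intro p q; rw [Equiv.Perm.mul_apply, Equiv.Perm.mul_apply, ha, hb]
  | inv a _ ha => intro p q; rw [← ha, ← Equiv.Perm.mul_apply, ← Equiv.Perm.mul_apply, mul_inv_cancel]; rfl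

def same (F : List ℕ) (p q : ℕ) : Bool := F.all fun r => Nat.beq (adj p r) (adj q r)

/-- The points not in `F` with the same adjacencies to `F` as `p` all lie in `c`. -/
def cand (F : List ℕ) (p : ℕ) (c : List ℕ) : Bool :=
  idx.all fun q => mem q F || mem q c || !same F p q

def det : List ℕ → List ℕ → Bool
  | _, [] => true
  | F, p :: ps => !mem p F && cand F p [p] && det (p :: F) ps

def Fixes (g : Equiv.Perm (Fin 56)) (F : List ℕ) : Prop := ∀ i : Fin 56, (i : ℕ) ∈ F → g i = i

theorem cand_spec {F : List ℕ} {c : List ℕ} {p : Fin 56} (h : cand F p c = true)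
    (hF' : ∀ r ∈ F, r < 56) (hp : (p : ℕ) ∉ F)
    {g : Equiv.Perm (Fin 56)} (hg : g ∈ G) (hF : Fixes g F) : (g p : ℕ) ∈ c := by
  have h1 := List.all_eq_true.1 h (g p) (mem_idx.2 (g p).2)
  simp only [Bool.or_eq_true, mem_iff, Bool.not_eq_true'] at h1
  rcases h1 with (h1 | h1) | h1
  · have := g.injective (hF _ h1)
    rw [this] at h1
    exact absurd h1 hp
  · exact h1
  · have h2 : same F p (g p) = true := by
      apply List.all_eq_true.2
      intro r hr
      have h3 := adj_G hg p ⟨r, hF' r hr⟩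
      rw [hF ⟨r, hF' r hr⟩ hr] at h3
      simp only at h3
      rw [h3]
      exact Nat.beq_refl _
    rw [h2] at h1; cases h1

theorem det_spec {F ps : List ℕ} (h : det F ps = true) (hF' : ∀ r ∈ F, r < 56)
    (hps : ∀ r ∈ ps, r < 56) {g : Equiv.Perm (Fin 56)} (hg : g ∈ G) (hF : Fixes g F) :
    Fixes g (ps.reverse ++ F) := by
  induction ps generalizing F with
  | nil => simpa using hF
  | cons p ps ih =>
    rw [det] at h
    simp only [Bool.and_eq_true, Bool.not_eq_true'] at h
    have hp : p < 56 := hps p (by simp)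
    have := ih h.2 (by
      intro r hr
      rcases List.mem_cons.1 hr with rfl | hr
      · exact hp
      · exact hF' r hr) (fun r hr => hps r (by simp [hr])) (by
      intro i hi
      rcases List.mem_cons.1 hi with hi | hi
      · have hi' : i = ⟨p, hp⟩ := Fin.ext hi
        subst hi'
        have h1 := cand_spec (p := ⟨p, hp⟩) h.1.2 hF' (by
          intro hc; rw [mem_iff.2 hc] at h; simp at h) hg hF
        exact Fin.ext (by simpa using h1)
      · exact hF i hi)
    simpa using this

def Hs : List ℕ → Subgroup (Equiv.Perm (Fin 56))
  | [] => G
  | b :: l => Hs l ⊓ MulAction.stabilizer (Equiv.Perm (Fin 56)) (Fin.ofNat 56 b)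

theorem mem_Hs {l : List ℕ} (hl : ∀ r ∈ l, r < 56) {g : Equiv.Perm (Fin 56)} :
    g ∈ Hs l ↔ g ∈ G ∧ Fixes g l := by
  induction l with
  | nil => simp [Hs, Fixes]
  | cons b l ih =>
    rw [Hs, Subgroup.mem_inf, ih (fun r hr => hl r (by simp [hr])), MulAction.mem_stabilizer_iff,
      Equiv.Perm.smul_def]
    have hb : b < 56 := hl b (by simp)
    have hb' : ((Fin.ofNat 56 b : Fin 56) : ℕ) = b := Nat.mod_eq_of_lt hb
    constructor
    · rintro ⟨⟨h1, h2⟩, h3⟩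
      refine ⟨h1, fun i hi => ?_⟩
      rcases List.mem_cons.1 hi with hi | hi
      · rw [← hb'] at hi
        rw [Fin.ext hi]; exact h3
      · exact h2 i hi
    · rintro ⟨h1, h2⟩
      exact ⟨⟨h1, fun i hi => h2 i (by simp [hi])⟩, h2 _ (by rw [hb']; simp)⟩

theorem card_stage (H : Subgroup (Equiv.Perm (Fin 56))) (b : Fin 56) (c : List ℕ) (hc : c.Nodup)
    (h1 : ∀ h ∈ H, (h b : ℕ) ∈ c) (h2 : ∀ q ∈ c, ∃ h ∈ H, (h b : ℕ) = q) :
    Nat.card H = c.length *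
      Nat.card (H ⊓ MulAction.stabilizer (Equiv.Perm (Fin 56)) b : Subgroup _) := by
  have e1 : (MulAction.stabilizer (Equiv.Perm (Fin 56)) b).subgroupOf H
      = MulAction.stabilizer H b := by
    ext g; rfl
  have e2 : Nat.card (MulAction.stabilizer H b) =
      Nat.card (H ⊓ MulAction.stabilizer (Equiv.Perm (Fin 56)) b : Subgroup _) := by
    rw [← e1, ← Subgroup.inf_subgroupOf_left]
    exact Nat.card_congr (Subgroup.subgroupOfEquivOfLe inf_le_left).toEquiv
  have e3 : (MulAction.orbit H b).ncard = c.length := by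
    have : (Fin.val '' (MulAction.orbit H b)) = (c.toFinset : Set ℕ) := by
      ext q
      simp only [Set.mem_image, List.coe_toFinset, Set.mem_ofPred_eq]
      constructor
      · rintro ⟨_, ⟨h, rfl⟩, rfl⟩
        exact h1 h h.2
      · intro hq
        obtain ⟨h, hh, rfl⟩ := h2 q hq
        exact ⟨h b, ⟨⟨h, hh⟩, rfl⟩, rfl⟩
    rw [← Set.ncard_image_of_injective _ Fin.val_injective, this, Set.ncard_coe_finset,
      List.toFinset_card_of_nodup hc]
  rw [← e2, ← e3, ← MulAction.index_stabilizer, mul_comm, Subgroup.card_mul_index]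

theorem stage (l ps c : List ℕ) (b : ℕ) (v w : List ℕ) (hl : ∀ r ∈ l, r < 56)
    (hps : ∀ r ∈ ps, r < 56) (hb : b < 56) (hb' : b ∉ ps.reverse ++ l) (hc : c.Nodup)
    (h1 : det l ps = true) (h2 : cand (ps.reverse ++ l) b c = true)
    (hv : ∀ r ∈ l, ap (wc v) r = r) (hw : ∀ r ∈ l, ap (wc w) r = r)
    (h3 : reach (wc v) (wc w) b c = true) :
    Nat.card (Hs l) = c.length * Nat.card (Hs (b :: l)) := by
  have hbv : ((Fin.ofNat 56 b : Fin 56) : ℕ) = b := Nat.mod_eq_of_lt hb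
  have hmem : ∀ w : List ℕ, (∀ r ∈ l, ap (wc w) r = r) → wp w ∈ Hs l := by
    intro w hw
    rw [mem_Hs hl]
    exact ⟨wp_mem w, fun i hi => Fin.ext (by rw [← rep_wp w i, hw i hi])⟩
  apply card_stage _ _ _ hc
  · intro h hh
    rw [mem_Hs hl] at hh
    apply cand_spec (F := ps.reverse ++ l) (by rw [hbv]; exact h2) _ (by rw [hbv]; exact hb')
      hh.1 (det_spec h1 hl hps hh.1 hh.2)
    intro r hr
    rcases List.mem_append.1 hr with hr | hr
    · exact hps r (List.mem_reverse.1 hr)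
    · exact hl r hr
  · apply reach_spec h3
    · rintro _ ⟨h, hh, rfl⟩
      exact ⟨⟨wp v * h, (Hs l).mul_mem (hmem v hv) hh, by rw [rep_wp v]; rfl⟩,
        ⟨wp w * h, (Hs l).mul_mem (hmem w hw) hh, by rw [rep_wp w]; rfl⟩⟩
    · exact ⟨1, (Hs l).one_mem, hbv⟩

def N0 : List ℕ := [36, 38, 42, 43, 47, 49, 50, 51, 52, 55]
def N1 : List ℕ := [1, 2, 3, 4, 5, 6, 7, 8, 9, 10, 11, 12, 13, 14, 15, 16, 17, 18, 19, 20, 21, 22, 23, 24, 25, 26, 27, 28, 29, 30, 31, 32, 33, 34, 35, 37, 39, 40, 41, 44, 45, 46, 48, 53, 54]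

def wa : List ℕ := [1, 1, 0, 0]
def wb : List ℕ := [0, 1, 1, 0]
def ws1 : List ℕ := [1, 1, 0, 0, 1, 1, 1, 1, 0, 0]
def ws2 : List ℕ := [0, 0, 1, 1]
def wt2 : List ℕ := [0, 1, 1, 1, 0, 0, 0, 1, 0, 0]
def ws : List ℕ := ws1 ++ ws2
def wt : List ℕ := ws2 ++ wt2
def wh2 : List ℕ := [1, 0, 0, 1, 1, 1, 1, 0, 0, 1, 1, 1, 1, 1, 0]
def wh3 : List ℕ := [0, 0, 1, 1, 1, 0, 0, 1, 1, 0, 0, 1, 1]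
def wh4 : List ℕ := [0, 1, 1, 1, 0, 0, 1, 1, 1, 0, 0, 1, 1, 1, 0]

def ca : ℕ := 0x22b24a8338958777232f16460ddd5878e69b44c9e93e6bb694736c5c4528170a9f013d2d412056be4c82
def cb : ℕ := 0x1811922932b0caa158123e71ae3b0a8d8e284b990dac505cdd711de54f15df05a6efc89b7508759e934
def cs : ℕ := 0x9949f3d24a91bc9229af1b03d775f211f84f88a7476d0141956376192c1a80b54239ebad713663a0c600
def ct : ℕ := 0x90b8efcf1d36c9eb05deb0cf5e6baa81541ca466b558429d9d905f8a844e08cc2135bb472252585124c0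

theorem wc_a : wc wa = ca := by decide +kernel
theorem wc_b : wc wb = cb := by decide +kernel
theorem wc_s : wc ws = cs := by decide +kernel
theorem wc_t : wc wt = ct := by decide +kernel
theorem wc_2 : wc wh2 = 0xace2a6cafd189047cfdf3b9b8ea3316424e50e256d1d67571522763462e1529c11a27d5e81c42c688040 := by decide +kernel
theorem wc_3 : wc wh3 = 0xadcc32cf4c75bc6b2dde47e85e696a36228ba5e63630441d9ce4c354f4594968db8211481ee25a502040 := by decide +kernel
theorem wc_4 : wc wh4 = 0xdce6729b4bd0c4f684aea5259f3a242a235b0c225682dd455dc5694c6470bb684b3237481d262c7de040 := by decide +kernel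

theorem reach_ab : reach ca cb 0 idx = true := by decide +kernel

theorem stage0 : Nat.card G = 56 * Nat.card (Hs [0]) := by
  refine stage [] [] idx 0 wa wb ?_ ?_ ?_ ?_ ?_ ?_ ?_ ?_ ?_ ?_
  · decide
  · decide
  · decide
  · decide
  · rw [idx_eq]; exact List.nodup_range
  · decide +kernel
  · decide +kernel
  · decide
  · decide
  · rw [wc_a, wc_b]; exact reach_ab

theorem stage1 : Nat.card (Hs [0]) = 45 * Nat.card (Hs [1, 0]) := by
  refine stage [0] [] N1 1 ws wt ?_ ?_ ?_ ?_ ?_ ?_ ?_ ?_ ?_ ?_ <;> try rw [wc_s]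
  all_goals try rw [wc_t]
  all_goals decide +kernel

theorem stage2 : Nat.card (Hs [1, 0]) = 8 * Nat.card (Hs [7, 1, 0]) := by
  refine stage [1, 0] [] [7, 11, 12, 17, 27, 32, 37, 40] 7 wh2 wh2 ?_ ?_ ?_ ?_ ?_ ?_ ?_ ?_ ?_ ?_
    <;> try rw [wc_2]
  all_goals decide +kernel

theorem stage3 : Nat.card (Hs [7, 1, 0]) = 2 * Nat.card (Hs [43, 7, 1, 0]) := by
  refine stage [7, 1, 0] [] [43, 55] 43 wh3 wh3 ?_ ?_ ?_ ?_ ?_ ?_ ?_ ?_ ?_ ?_ <;> try rw [wc_3]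
  all_goals decide +kernel

theorem stage4 : Nat.card (Hs [43, 7, 1, 0]) = 2 * Nat.card (Hs [2, 43, 7, 1, 0]) := by
  refine stage [43, 7, 1, 0] [39, 55, 23, 36, 42, 8, 17, 19, 21, 34] [2, 30] 2 wh4 wh4
    ?_ ?_ ?_ ?_ ?_ ?_ ?_ ?_ ?_ ?_ <;> try rw [wc_4]
  all_goals decide +kernel

def rest : List ℕ := [34, 39, 42, 47, 49, 51, 55, 3, 4, 5, 6, 8, 9, 10, 11, 12, 13, 14, 15, 16, 17,
  18, 19, 20, 21, 22, 23, 24, 25, 26, 27, 28, 29, 30, 31, 32, 33, 35, 36, 37, 38, 40, 41, 44, 45,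
  46, 48, 50, 52, 53, 54]

theorem stage5 : Hs [2, 43, 7, 1, 0] = ⊥ := by
  rw [Subgroup.eq_bot_iff_forall]
  intro g hg
  rw [mem_Hs (by decide)] at hg
  have h := det_spec (ps := rest) (by decide +kernel) (by decide) (by decide +kernel) hg.1 hg.2
  ext i
  rw [h i ((by decide +kernel : ∀ i : Fin 56, (i : ℕ) ∈ rest.reverse ++ [2, 43, 7, 1, 0]) i)]
  rfl

theorem card_G : Nat.card G = 80640 := by
  rw [stage0, stage1, stage2, stage3, stage4, stage5, Subgroup.card_bot]

/-! ### Primitivity -/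

theorem reach_st0 : (N0.all fun q => reach cs ct q N0) = true := by decide +kernel
theorem reach_st1 : (N1.all fun q => reach cs ct q N1) = true := by decide +kernel

def F0 : Finset (Fin 56) := Finset.univ.filter fun i => mem i (0 :: N0) = true
def F1 : Finset (Fin 56) := Finset.univ.filter fun i => mem i (0 :: N1) = true

theorem card_F0 : F0.card = 11 := by decide +kernel
theorem card_F1 : F1.card = 46 := by decide +kernel

theorem mem_three (i : Fin 56) : (i : ℕ) = 0 ∨ (i : ℕ) ∈ N0 ∨ (i : ℕ) ∈ N1 :=
  (by decide +kernel : ∀ i : Fin 56, (i : ℕ) = 0 ∨ (i : ℕ) ∈ N0 ∨ (i : ℕ) ∈ N1) i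

open scoped Pointwise in
theorem prim {A : Type} [Group A] [MulAction A (Fin 56)] (a b s t : A)
    (ha : ∀ i : Fin 56, ap ca i = (a • i : Fin 56)) (hb : ∀ i : Fin 56, ap cb i = (b • i : Fin 56))
    (hs : ∀ i : Fin 56, ap cs i = (s • i : Fin 56))
    (ht : ∀ i : Fin 56, ap ct i = (t • i : Fin 56)) :
    MulAction.IsPreprimitive A (Fin 56) := by
  have htr : MulAction.IsPretransitive A (Fin 56) := by
    have h1 : ∀ k ∈ idx, ∃ g : A, ((g • (0 : Fin 56) : Fin 56) : ℕ) = k := by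
      apply reach_spec reach_ab
      · rintro _ ⟨g, rfl⟩
        exact ⟨⟨a * g, by rw [ha, mul_smul]⟩, ⟨b * g, by rw [hb, mul_smul]⟩⟩
      · exact ⟨1, by simp⟩
    refine (MulAction.isPretransitive_iff_base (G := A) (0 : Fin 56)).2 fun i => ?_
    obtain ⟨g, hg⟩ := h1 i (mem_idx.2 i.2)
    exact ⟨g, Fin.ext hg⟩
  refine MulAction.IsPreprimitive.of_isTrivialBlock_base (0 : Fin 56) ?_
  intro B h0 hB
  have hst : ∀ (c : ℕ) (g : A), (∀ i : Fin 56, ap c i = (g • i : Fin 56)) → ap c 0 = 0 →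
      ∀ k, (∃ i ∈ B, (i : ℕ) = k) → ∃ i ∈ B, (i : ℕ) = ap c k := by
    rintro c g hg hc _ ⟨i, hi, rfl⟩
    refine ⟨g • i, ?_, (hg i).symm⟩
    have h00 : g • (0 : Fin 56) = 0 := Fin.ext (by rw [← hg]; exact hc)
    have : g • B = B := hB.smul_eq_of_mem h0 (by rw [h00]; exact h0)
    rw [← this]
    exact Set.smul_mem_smul_set hi
  have hall : ∀ N : List ℕ, (N.all fun q => reach cs ct q N) = true → ∀ i ∈ B, (i : ℕ) ∈ N →
      ∀ j : Fin 56, (j : ℕ) ∈ N → j ∈ B := by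
    intro N hN i hi hiN j hj
    have h1 := reach_spec (List.all_eq_true.1 hN i hiN) (fun k => ∃ i ∈ B, (i : ℕ) = k)
      (fun k hk => ⟨hst cs s hs (by decide +kernel) k hk, hst ct t ht (by decide +kernel) k hk⟩)
      ⟨i, hi, rfl⟩ j hj
    obtain ⟨i', hi', h⟩ := h1
    rw [← Fin.ext h]; exact hi'
  have hdvd := hB.ncard_dvd_card ⟨0, h0⟩
  rw [Nat.card_eq_fintype_card, Fintype.card_fin] at hdvd
  by_cases c0 : ∃ i ∈ B, (i : ℕ) ∈ N0
  · obtain ⟨i, hi, hiN⟩ := c0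
    have c0 := hall N0 reach_st0 i hi hiN
    by_cases c1 : ∃ i ∈ B, (i : ℕ) ∈ N1
    · obtain ⟨i, hi, hiN⟩ := c1
      have c1 := hall N1 reach_st1 i hi hiN
      right
      ext j
      simp only [Set.mem_univ, iff_true]
      rcases mem_three j with h | h | h
      · rw [show j = 0 from Fin.ext h]; exact h0
      · exact c0 j h
      · exact c1 j h
    · exfalso
      have : B = (F0 : Set (Fin 56)) := by
        ext j
        simp only [F0, Finset.coe_filter, Finset.mem_univ, true_and, Set.mem_ofPred_eq, mem_iff,
          List.mem_cons]
        constructor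
        · intro hj
          rcases mem_three j with h | h | h
          · exact Or.inl h
          · exact Or.inr h
          · exact absurd ⟨j, hj, h⟩ c1
        · rintro (h | h)
          · rw [show j = 0 from Fin.ext h]; exact h0
          · exact c0 j h
      rw [this, Set.ncard_coe_finset, card_F0] at hdvd
      revert hdvd; decide
  · by_cases c1 : ∃ i ∈ B, (i : ℕ) ∈ N1
    · obtain ⟨i, hi, hiN⟩ := c1
      have c1 := hall N1 reach_st1 i hi hiN
      exfalso
      have : B = (F1 : Set (Fin 56)) := by
        ext j
        simp only [F1, Finset.coe_filter, Finset.mem_univ, true_and, Set.mem_ofPred_eq, mem_iff,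
          List.mem_cons]
        constructor
        · intro hj
          rcases mem_three j with h | h | h
          · exact Or.inl h
          · exact absurd ⟨j, hj, h⟩ c0
          · exact Or.inr h
        · rintro (h | h)
          · rw [show j = 0 from Fin.ext h]; exact h0
          · exact c1 j h
      rw [this, Set.ncard_coe_finset, card_F1] at hdvd
      revert hdvd; decide
    · left
      have hz : ∀ j ∈ B, j = 0 := by
        intro j hj
        rcases mem_three j with h | h | h
        · exact Fin.ext h
        · exact absurd ⟨j, hj, h⟩ c0
        · exact absurd ⟨j, hj, h⟩ c1
      intro i hi j hj
      rw [hz i hi, hz j hj]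

/-- In a primitive group of degree 56 whose order is not divisible by 49, every nontrivial
normal subgroup contains all elements of order 7. -/
theorem seven_mem {A : Type} [Group A] [Finite A] [MulAction A (Fin 56)] [FaithfulSMul A (Fin 56)]
    (hp : MulAction.IsPreprimitive A (Fin 56)) (hA : ¬ 49 ∣ Nat.card A) (N : Subgroup A)
    (hN : N.Normal) (hb : N ≠ ⊥) (a : A) (ha : a ^ 7 = 1) : a ∈ N := by
  have htr : MulAction.IsPretransitive N (Fin 56) := by
    apply MulAction.IsQuasiPreprimitive.isPretransitive_of_normal
    intro h
    apply hb
    rw [Subgroup.eq_bot_iff_forall]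
    intro g hg
    apply FaithfulSMul.eq_of_smul_eq_smul (α := Fin 56)
    intro i
    have hi : i ∈ MulAction.fixedPoints N (Fin 56) := by rw [h]; trivial
    rw [one_smul]
    exact hi ⟨g, hg⟩
  have h56 : 56 ∣ Nat.card N := by
    have := MulAction.index_stabilizer_of_transitive N (0 : Fin 56)
    rw [Nat.card_eq_fintype_card, Fintype.card_fin] at this
    rw [← this]
    exact Subgroup.index_dvd_card _
  have hc := Subgroup.card_mul_index N
  have h7 : Nat.Coprime 7 N.index := by
    rw [Nat.Prime.coprime_iff_not_dvd (by norm_num)]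
    rintro ⟨m, hm⟩
    obtain ⟨l, hl⟩ := h56
    apply hA
    rw [← hc, hm, hl]
    exact ⟨8 * l * m, by ring⟩
  have h1 : ((a : A ⧸ N)) ^ 7 = 1 := by
    rw [← QuotientGroup.mk_pow, ha]; rfl
  have h2 : ((a : A ⧸ N)) ^ N.index = 1 := by
    rw [Subgroup.index]; exact pow_card_eq_one'
  have h3 := orderOf_dvd_of_pow_eq_one h1
  have h4 := orderOf_dvd_of_pow_eq_one h2
  have h5 := Nat.eq_one_of_dvd_coprimes h7 h3 h4
  rw [orderOf_eq_one_iff] at h5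
  exact (QuotientGroup.eq_one_iff a).1 h5

def gw (w : List ℕ) : G := ⟨wp w, wp_mem w⟩

theorem gw_smul (w : List ℕ) (i : Fin 56) : ap (wc w) i = (gw w • i : Fin 56) := rep_wp w i

theorem prim_G : MulAction.IsPreprimitive G (Fin 56) :=
  prim (gw wa) (gw wb) (gw ws) (gw wt) (by rw [← wc_a]; exact gw_smul _)
    (by rw [← wc_b]; exact gw_smul _) (by rw [← wc_s]; exact gw_smul _)
    (by rw [← wc_t]; exact gw_smul _)

/-- The socle of `G`. -/
def S : Subgroup G := Subgroup.closure {g : G | g ^ 7 = 1}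

theorem S_normal : S.Normal := by
  constructor
  intro n hn g
  induction hn using Subgroup.closure_induction with
  | mem n hn =>
    apply Subgroup.subset_closure
    have : n ^ 7 = 1 := hn
    show (g * n * g⁻¹) ^ 7 = 1
    rw [conj_pow, this]; simp
  | one => simp
  | mul a b _ _ ha hb =>
    have : g * (a * b) * g⁻¹ = (g * a * g⁻¹) * (g * b * g⁻¹) := by group
    rw [this]; exact S.mul_mem ha hb
  | inv a _ ha =>
    have : g * a⁻¹ * g⁻¹ = (g * a * g⁻¹)⁻¹ := by group
    rw [this]; exact S.inv_mem ha

def seven (c : ℕ) : Bool :=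
  idx.all fun i => Nat.beq (ap c (ap c (ap c (ap c (ap c (ap c (ap c i))))))) i

theorem gw_seven (w : List ℕ) (h : seven (wc w) = true) : gw w ^ 7 = 1 := by
  apply Subtype.ext
  ext i
  have h1 := Nat.eq_of_beq_eq_true (List.all_eq_true.1 h i (mem_idx.2 i.2))
  rw [rep_wp w, rep_wp w, rep_wp w, rep_wp w, rep_wp w, rep_wp w, rep_wp w] at h1
  exact h1

theorem gw_S (w : List ℕ) (h : seven (wc w) = true) : gw w ∈ S :=
  Subgroup.subset_closure (gw_seven w h)

theorem wa_S : gw wa ∈ S := gw_S _ (by rw [wc_a]; decide +kernel)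
theorem wb_S : gw wb ∈ S := gw_S _ (by rw [wc_b]; decide +kernel)

theorem wc_s1 : wc ws1 = 0xb708123c500da1c8d3091d04849dec91421bace181ba774b0e6896947657daac557f5310bde6296b22b3 := by decide +kernel
theorem wc_s2 : wc ws2 = 0x5a2680a633aa1e68447cd9172a5402a0b9f3541652808c9c4d4c0f774d83d5832b7866f7bac46dbc9171 := by decide +kernel
theorem wc_t2 : wc wt2 = 0xa62c8380049164b18120c414a2e1f06df958ccad4fdec9d385d7abda317190d56da8912f6a608e59c5f4 := by decide +kernel

theorem gw_append (v w : List ℕ) : gw (v ++ w) = gw v * gw w := by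
  apply Subtype.ext
  show wp (v ++ w) = wp v * wp w
  induction v with
  | nil => simp [wp]
  | cons a v ih =>
    cases a with
    | zero => rw [List.cons_append, wp, wp, ih, mul_assoc]
    | succ a => rw [List.cons_append, wp, wp, ih, mul_assoc]

theorem s1_S : gw ws1 ∈ S := gw_S _ (by rw [wc_s1]; decide +kernel)
theorem s2_S : gw ws2 ∈ S := gw_S _ (by rw [wc_s2]; decide +kernel)
theorem t2_S : gw wt2 ∈ S := gw_S _ (by rw [wc_t2]; decide +kernel)
theorem s_S : gw ws ∈ S := by rw [ws, gw_append]; exact S.mul_mem s1_S s2_S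
theorem t_S : gw wt ∈ S := by rw [wt, gw_append]; exact S.mul_mem s2_S t2_S

theorem prim_S : MulAction.IsPreprimitive S (Fin 56) :=
  prim ⟨gw wa, wa_S⟩ ⟨gw wb, wb_S⟩ ⟨gw ws, s_S⟩ ⟨gw wt, t_S⟩ (by rw [← wc_a]; exact gw_smul _)
    (by rw [← wc_b]; exact gw_smul _) (by rw [← wc_s]; exact gw_smul _)
    (by rw [← wc_t]; exact gw_smul _)

theorem gw_comm (v w : List ℕ) (h : gw v * gw w = gw w * gw v) :
    ap (wc v) (ap (wc w) 0) = ap (wc w) (ap (wc v) 0) := by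
  have h1 : wp v * wp w = wp w * wp v := congrArg Subtype.val h
  have h2 : ((wp v * wp w) 0 : ℕ) = ((wp w * wp v) 0 : Fin 56) := by rw [h1]
  rw [Equiv.Perm.mul_apply, Equiv.Perm.mul_apply, ← rep_wp, ← rep_wp, ← rep_wp, ← rep_wp] at h2
  exact h2

theorem not_comm : gw wa * gw wb ≠ gw wb * gw wa := by
  intro h
  have h2 := gw_comm _ _ h
  rw [wc_a, wc_b] at h2
  revert h2
  decide +kernel

theorem nontriv {a b : G} (ha : a ∈ S) (hb : b ∈ S) (h : a * b ≠ b * a) : Nontrivial S :=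
  ⟨⟨⟨a, ha⟩, ⟨b, hb⟩, fun h' => h (by rw [show a = b from congrArg Subtype.val h'])⟩⟩

theorem not_49_G : ¬ 49 ∣ Nat.card G := by rw [card_G]; norm_num

theorem S_simple : IsSimpleGroup S := by
  have hnt : Nontrivial S := nontriv wa_S wb_S not_comm
  refine { hnt with eq_bot_or_eq_top_of_normal := ?_ }
  intro N hN
  by_cases hb : N = ⊥
  · exact Or.inl hb
  right
  have h7 := seven_mem prim_S (fun h => not_49_G (h.trans (Subgroup.card_subgroup_dvd_card S)))
    N hN hb
  have hle : S ≤ N.map S.subtype := by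
    refine (Subgroup.closure_le _).2 ?_
    intro g hg
    have hgS : g ∈ S := Subgroup.subset_closure hg
    exact ⟨⟨g, hgS⟩, h7 ⟨g, hgS⟩ (Subtype.ext hg), rfl⟩
  rw [eq_top_iff]
  rintro ⟨g, hg⟩ -
  obtain ⟨n, hn, h⟩ := hle hg
  have : n = ⟨g, hg⟩ := Subtype.ext h
  rw [← this]; exact hn

theorem S_centralizer : Subgroup.centralizer (S : Set G) = ⊥ := by
  by_contra hb
  have hn : (Subgroup.centralizer (S : Set G)).Normal := by
    have := S_normal
    infer_instance
  have h7 := seven_mem prim_G not_49_G _ hn hb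
  have ha : gw wa ^ 7 = 1 := gw_seven _ (by rw [wc_a]; decide +kernel)
  have h1 := h7 _ ha
  rw [Subgroup.mem_centralizer_iff] at h1
  exact not_comm (h1 _ wb_S).symm

/-! ### Rigidity -/

theorem G_ind {H : Subgroup (Equiv.Perm (Fin 56))} (Q : Equiv.Perm (Fin 56) → Prop) (h1 : Q 1)
    (hm : ∀ a b, Q a → Q b → Q (a * b)) {s : Set (Equiv.Perm (Fin 56))}
    (hH : H = Subgroup.closure s) (hs : ∀ a ∈ s, Q a) : ∀ g ∈ H, Q g := by
  subst hH
  intro g hg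
  induction hg using Subgroup.closure_induction with
  | mem g hg => exact hs g hg
  | one => exact h1
  | mul a b _ _ ha hb => exact hm a b ha hb
  | inv a _ ha =>
    have hp : ∀ n : ℕ, Q (a ^ n) := by
      intro n
      induction n with
      | zero => simpa using h1
      | succ n ih => rw [pow_succ]; exact hm _ _ ih ha
    have : a⁻¹ = a ^ (orderOf a - 1) := by
      rw [inv_eq_iff_mul_eq_one, ← pow_succ', Nat.sub_add_cancel (orderOf_pos a), pow_orderOf_eq_one]
    rw [this]; exact hp _

/-- Codes of the 16 elements of the centralizer of `y`. -/
def Cl : List ℕ := [0xdf6d74cf2c70beeb6caeaa689e69648e28607de75c6da6585d65544d24503ce34c2ca2481c61440c2040,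
  0xb0241134e67374312dc978921af2a0945d4127687791c7c0a9a20c8d37aec743e9627c155a82c79ab6d4,
  0xb6bb9e3f47cd8661c43aa153a1d9c128b41bc02d6c8372545dc569963d83651c62006cc8692616bf290c,
  0x1320f6c5124fd6f587d172e34a119b9d8ba4ceb42d06cc0cab72222a50a67de64552835571301a74e829,
  0x1ce98265ec3141d69646a6254f5a241800e0372b846edce95ec5459caaef2767cb3123c8de351c874062,
  0x5b4beb7f6cd9ba171a79700a8d04a0a149813ce0c7904362aad20b1a7c9dc02258a53c55b25337d516c5,
  0x69177224235f0f5ddcdaa52796e4c148cbdbc749968073c55c4558a063a1cebc008a3648b4aa6c41e90b,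
  0x71e84ec2b3c9990b370973062838db4e9764651bda056c4ba872004a8d35372cd41657d51278adbb6818,
  0x283ca76342fc193144d7136449381c8735b0c6cd880bb9ca8522cac29f1d6586d6b499589e5a97d2937,
  0x512c67865b9dcdfa4c8ea1c27b0d1b3963e49a83400580f75cb56dcab19940ad44711bc81766a225382c,
  0x313646d4a0e13498a99575abdb3464d1ac60bd23d46c09aca982043b2a1fba7407dde7552c2705c2306d,
  0xa637e84279b53f01622aa6b208d7a045c641753c4c914bed5c0547d0e4890c6b96b3684862bdcbce56c4,
  0x8a5252b86bd0c732c59d770eacfd817b77db86366980c744a942164744f09a80dab42d55032b1834a907,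
  0x14ac130e876e64d60b1aadf4cb109bdac264d657e20698475cc55a7918f3bd299c12b40850eb403e7816,
  0x2e7ce39928437cf018a17b11399ae40adc2040a2456e2d56aa921cd9e94d753bf71f2b95334114c4605a,
  0x606365bd3d662715004aab5ed1fca0ac4cc1ba7c0b90541a5e25770b628f86376c58e0c8a511cc6686dc]

def wcen : List ℕ := [0, 1, 1, 0, 0, 0, 1, 0, 0, 0, 1, 1, 0, 0, 0, 1, 0, 0, 0, 1, 0, 0, 1, 1, 1, 0, 0]

def Cw : List (List ℕ) := (List.range 8).map (fun i => List.replicate i 1) ++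
  (List.range 8).map (fun i => List.replicate i 1 ++ wcen)

theorem Cl_eq : Cl = Cw.map wc := by decide +kernel

theorem Cl_comm : (Cl.all fun c => Nat.beq (comp c cy) (comp cy c)) = true := by decide +kernel

/-- `(y w)^4 ≠ 1` where `w` has code `k`. -/
def notord4 (k : ℕ) : Bool := idx.any fun i => !Nat.beq
  (ap cy (ap k (ap cy (ap k (ap cy (ap k (ap cy (ap k i)))))))) i

def missing (K : List ℕ) : Bool := idx.any fun q => !mem q K

/-- The group generated by `y` and the element with code `k` is not transitive. -/
def intrans (k : ℕ) : Bool := dfs (ap cy) (ap k) tt missing 60 [0] [0]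

def iscen (k : ℕ) : Bool := Cl.any fun c => Nat.beq (comp c cz) (comp k c)

def okz (k : ℕ) : Bool := notord4 k || intrans k || iscen k

def truef (_ : List ℕ) : Bool := true

theorem class_z : dfs (fun k => comp3 cx k cxi) (fun k => comp3 cy k cyi) okz truef 400 [cz] [cz]
    = true := by decide +kernel

theorem class_spec {h : Equiv.Perm (Fin 56)} (hh : h ∈ G) :
    ∃ k, Rep k (h * (x * y)⁻¹ * h⁻¹) ∧ okz k = true := by
  obtain ⟨K, h1, h2, -⟩ := dfs_spec _ _ okz truef (fun _ => True) (fun _ _ => ⟨trivial, trivial⟩)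
    400 [cz] [cz] (by simp) (by simp) (by simp) class_z
  have key := G_ind (fun g => ∀ p, (∃ k ∈ K, Rep k p) → ∃ k ∈ K, Rep k (g * p * g⁻¹))
    (by intro p hp; simpa using hp)
    (by
      intro a b ha hb p hp
      have := ha _ (hb p hp)
      rwa [show a * (b * p * b⁻¹) * a⁻¹ = a * b * p * (a * b)⁻¹ by group] at this)
    (H := G) rfl (by
      rintro a (rfl | rfl) p ⟨k, hk, hp⟩
      · exact ⟨_, (h2 k hk).2.2.1, rep_x.mul3 hp rep_xi⟩
      · exact ⟨_, (h2 k hk).2.2.2, rep_y.mul3 hp rep_yi⟩) h hh _ ⟨cz, h1 (by simp), rep_z⟩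
  obtain ⟨k, hk, hr⟩ := key
  exact ⟨k, hr, (h2 k hk).2.1⟩

theorem Rep.pow3 {c : ℕ} {g : Equiv.Perm (Fin 56)} (h : Rep c g) : Rep (comp3 c c c) (g ^ 3) := by
  rw [pow_succ, pow_two]; exact h.mul3 h h

theorem Rep.pow4 {c : ℕ} {g : Equiv.Perm (Fin 56)} (h : Rep c g) :
    Rep (comp (comp3 c c c) c) (g ^ 4) := by
  rw [pow_succ]; exact h.pow3.mul h

theorem Rep.pow5 {c : ℕ} {g : Equiv.Perm (Fin 56)} (h : Rep c g) :
    Rep (comp3 (comp3 c c c) c c) (g ^ 5) := by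
  rw [pow_succ, pow_succ]; exact h.pow3.mul3 h h

theorem Rep.pow7 {c : ℕ} {g : Equiv.Perm (Fin 56)} (h : Rep c g) :
    Rep (comp3 (comp3 (comp3 c c c) c c) c c) (g ^ 7) := by
  rw [pow_succ, pow_succ]; exact h.pow5.mul3 h h

theorem Rep.pow8 {c : ℕ} {g : Equiv.Perm (Fin 56)} (h : Rep c g) :
    Rep (comp (comp3 (comp3 (comp3 c c c) c c) c c) c) (g ^ 8) := by
  rw [pow_succ]; exact h.pow7.mul h

theorem ne_one_at {c : ℕ} {g : Equiv.Perm (Fin 56)} (h : Rep c g) (i : Fin 56)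
    (h' : ap c i ≠ i) : g ≠ 1 := by
  rintro rfl
  exact h' (h i)

theorem ord4_spec {c k : ℕ} {g w : Equiv.Perm (Fin 56)} (hc : Rep c g) (hk : Rep k w)
    (h : (g * w) ^ 4 = 1) {i : ℕ} (hi : i < 56) :
    ap c (ap k (ap c (ap k (ap c (ap k (ap c (ap k i))))))) = i := by
  have e3 : ((g * w) ^ 4) ⟨i, hi⟩ = ⟨i, hi⟩ := by rw [h]; rfl
  have h8 : ap k i = (w ⟨i, hi⟩ : ℕ) := hk ⟨i, hi⟩
  rw [h8, hc, hk, hc, hk, hc, hk, hc]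
  exact congrArg Fin.val e3

theorem x_pow : x ^ 4 = 1 := by
  have h := rep_x.pow4
  rw [show comp (comp3 cx cx cx) cx = cid by decide +kernel] at h
  exact h.inj rep_one

theorem conj_inv_pow {g a : Equiv.Perm (Fin 56)} (h : a ^ 4 = 1) :
    (g * a⁻¹ * g⁻¹) ^ 4 = 1 := by
  rw [conj_pow, inv_pow, h]; simp

theorem G_trans (p : Fin 56) : ∃ g ∈ G, g 0 = p := by
  have := prim_G.toIsPretransitive
  obtain ⟨g, hg⟩ := MulAction.exists_smul_eq G (0 : Fin 56) p
  exact ⟨g, g.2, hg⟩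

theorem rigid (x' y' z' : Equiv.Perm (Fin 56)) (h1 : x' * y' * z' = 1)
    (hcl : Subgroup.closure {x', y'} = G)
    (hx : ∃ g ∈ G, g * x * g⁻¹ = x') (hy : ∃ g ∈ G, g * y * g⁻¹ = y')
    (hz : ∃ g ∈ G, g * (x * y)⁻¹ * g⁻¹ = z') :
    ∃ g ∈ G, g * x * g⁻¹ = x' ∧ g * y * g⁻¹ = y' ∧ g * (x * y)⁻¹ * g⁻¹ = z' := by
  obtain ⟨g1, hg1, hx⟩ := hx
  obtain ⟨g2, hg2, hy⟩ := hy
  obtain ⟨g3, hg3, hz⟩ := hz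
  obtain ⟨k, hk, hok⟩ := class_spec (G.mul_mem (G.inv_mem hg2) hg3)
  have hx'eq : x' = (y' * z')⁻¹ := by
    rw [eq_inv_iff_mul_eq_one, ← mul_assoc]; exact h1
  generalize hw : (g2⁻¹ * g3) * (x * y)⁻¹ * (g2⁻¹ * g3)⁻¹ = w at hk
  have hz' : z' = g2 * w * g2⁻¹ := by rw [← hw, ← hz]; group
  simp only [okz, Bool.or_eq_true] at hok
  rcases hok with (hok | hok) | hok
  · exfalso
    obtain ⟨i, hi, h⟩ := List.any_eq_true.1 hok
    rw [mem_idx] at hi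
    have e1 : y * w = (g2⁻¹ * g1) * x⁻¹ * (g2⁻¹ * g1)⁻¹ := by
      have : y' * z' = x'⁻¹ := by rw [hx'eq, inv_inv]
      rw [hz', ← hy, ← hx] at this
      calc y * w = g2⁻¹ * (g2 * y * g2⁻¹ * (g2 * w * g2⁻¹)) * g2 := by group
        _ = _ := by rw [this]; group
    have e2 : (y * w) ^ 4 = 1 := by
      rw [e1]; exact conj_inv_pow x_pow
    have e4 := ord4_spec rep_y hk e2 hi
    rw [e4] at h
    simp at h
  · exfalso
    obtain ⟨K, hK1, hK2, hK3⟩ := dfs_spec (ap cy) (ap k) tt missing (fun _ => True)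
      (fun _ _ => ⟨trivial, trivial⟩) 60 [0] [0] (by simp) (by simp) (by simp) hok
    obtain ⟨p, hp, hpm⟩ := List.any_eq_true.1 hK3
    rw [mem_idx] at hp
    have hpK : p ∉ K := by
      intro hc; rw [mem_iff.2 hc] at hpm; simp at hpm
    have qy : ∀ i : Fin 56, (i : ℕ) ∈ K → ((g2⁻¹ * y' * g2) i : ℕ) ∈ K := by
      intro i hi
      rw [← hy, show g2⁻¹ * (g2 * y * g2⁻¹) * g2 = y by group, ← rep_y]
      exact (hK2 i hi).2.2.1
    have qz : ∀ i : Fin 56, (i : ℕ) ∈ K → ((g2⁻¹ * z' * g2) i : ℕ) ∈ K := by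
      intro i hi
      rw [hz', show g2⁻¹ * (g2 * w * g2⁻¹) * g2 = w by group, ← hk]
      exact (hK2 i hi).2.2.2
    have hQ1 : ∀ i : Fin 56, (i : ℕ) ∈ K → ((g2⁻¹ * 1 * g2) i : ℕ) ∈ K := by
      intro i hi
      rw [mul_one, inv_mul_cancel]; exact hi
    have hQm : ∀ a b : Equiv.Perm (Fin 56),
        (∀ i : Fin 56, (i : ℕ) ∈ K → ((g2⁻¹ * a * g2) i : ℕ) ∈ K) →
        (∀ i : Fin 56, (i : ℕ) ∈ K → ((g2⁻¹ * b * g2) i : ℕ) ∈ K) →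
        ∀ i : Fin 56, (i : ℕ) ∈ K → ((g2⁻¹ * (a * b) * g2) i : ℕ) ∈ K := by
      intro a b ha hb i hi
      rw [show g2⁻¹ * (a * b) * g2 = (g2⁻¹ * a * g2) * (g2⁻¹ * b * g2) by group]
      exact ha _ (hb i hi)
    have qx := G_ind (fun g => ∀ i : Fin 56, (i : ℕ) ∈ K → ((g2⁻¹ * g * g2) i : ℕ) ∈ K)
      hQ1 hQm (s := {y', z'}) rfl (by
        rintro a (rfl | rfl)
        · exact qy
        · exact qz) x' (by
        rw [hx'eq]
        exact Subgroup.inv_mem _ (Subgroup.mul_mem _ (Subgroup.subset_closure (by simp))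
          (Subgroup.subset_closure (by simp))))
    have qG := G_ind (fun g => ∀ i : Fin 56, (i : ℕ) ∈ K → ((g2⁻¹ * g * g2) i : ℕ) ∈ K)
      hQ1 hQm (s := {x', y'}) hcl.symm (by
        rintro a (rfl | rfl)
        · exact qx
        · exact qy)
    obtain ⟨g, hg, hgp⟩ := G_trans ⟨p, hp⟩
    have := qG (g2 * g * g2⁻¹) (G.mul_mem (G.mul_mem hg2 hg) (G.inv_mem hg2)) 0 (hK1 (by simp))
    rw [show g2⁻¹ * (g2 * g * g2⁻¹) * g2 = g by group, hgp] at this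
    exact hpK this
  · obtain ⟨c, hc, h⟩ := List.any_eq_true.1 hok
    have hcy := Nat.eq_of_beq_eq_true (List.all_eq_true.1 Cl_comm c hc)
    have h := Nat.eq_of_beq_eq_true h
    rw [Cl_eq] at hc
    obtain ⟨v, -, rfl⟩ := List.mem_map.1 hc
    have rv := rep_wp v
    have e1 : wp v * y = y * wp v := by
      have a1 := rv.mul rep_y
      rw [hcy] at a1
      exact a1.inj (rep_y.mul rv)
    have e2 : wp v * (x * y)⁻¹ = w * wp v := by
      have a1 := rv.mul rep_z
      rw [h] at a1
      exact a1.inj (hk.mul rv)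
    have f1 : g2 * wp v * y * (g2 * wp v)⁻¹ = y' := by
      rw [← hy]
      calc g2 * wp v * y * (g2 * wp v)⁻¹ = g2 * (wp v * y) * (wp v)⁻¹ * g2⁻¹ := by group
        _ = _ := by rw [e1]; group
    have f2 : g2 * wp v * (x * y)⁻¹ * (g2 * wp v)⁻¹ = z' := by
      rw [hz']
      calc g2 * wp v * (x * y)⁻¹ * (g2 * wp v)⁻¹
          = g2 * (wp v * (x * y)⁻¹) * (wp v)⁻¹ * g2⁻¹ := by group
        _ = _ := by rw [e2]; group
    refine ⟨g2 * wp v, G.mul_mem hg2 (wp_mem v), ?_, f1, f2⟩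
    rw [hx'eq, ← f1, ← f2]
    group

/-! ### Rationality -/

theorem y_pow : y ^ 8 = 1 := by
  have h := rep_y.pow8
  rw [show comp (comp3 (comp3 (comp3 cy cy cy) cy cy) cy cy) cy = cid by decide +kernel] at h
  exact h.inj rep_one

theorem z_pow : ((x * y)⁻¹) ^ 2 = 1 := by
  have h := rep_z.mul rep_z
  rw [show comp cz cz = cid by decide +kernel] at h
  rw [← h.inj rep_one, pow_two]

theorem ne_one_of {c : ℕ} {g : Equiv.Perm (Fin 56)} (h : Rep c g) (h' : ap c 0 ≠ 0) : g ≠ 1 := by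
  rintro rfl
  exact h' (h 0)

theorem order_x : orderOf x = 4 := by
  have := orderOf_eq_prime_pow (p := 2) (n := 1) (x := x) (by
    have h : Rep (comp cx cx) (x * x) := rep_x.mul rep_x
    rw [pow_one, pow_two]
    intro hc
    have h1 := h 1
    rw [hc] at h1
    revert h1
    decide +kernel) x_pow
  exact this

theorem order_y : orderOf y = 8 := by
  have := orderOf_eq_prime_pow (p := 2) (n := 2) (x := y) (by
    exact ne_one_at rep_y.pow4 2 (by decide +kernel)) y_pow
  exact this

theorem order_z : orderOf (x * y)⁻¹ = 2 := by
  apply orderOf_eq_prime z_pow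
  exact ne_one_of rep_z (by decide +kernel)

theorem rat_of {g : Equiv.Perm (Fin 56)} (w : List ℕ) {c d : ℕ} (hc : Rep c g) (n : ℕ)
    (hd : Rep d (g ^ n)) (h : comp (wc w) c = comp d (wc w)) : 
    ∃ h ∈ G, h * g * h⁻¹ = g ^ (n : ℤ) := by
  refine ⟨wp w, wp_mem w, ?_⟩
  have h1 := (rep_wp w).mul hc
  rw [h] at h1
  have h2 := h1.inj (hd.mul (rep_wp w))
  rw [h2, zpow_natCast]
  group

theorem rat_x3 : ∃ h ∈ G, h * x * h⁻¹ = x ^ (3 : ℤ) :=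
  rat_of [1, 1, 0, 0, 1, 1, 0, 0, 1, 1, 0, 0, 1] rep_x 3 rep_x.pow3 (by decide +kernel)
theorem rat_y3 : ∃ h ∈ G, h * y * h⁻¹ = y ^ (3 : ℤ) :=
  rat_of [0, 1, 1, 1, 0, 0, 1, 1, 1, 0, 0, 1, 1, 1, 0] rep_y 3 rep_y.pow3 (by decide +kernel)
theorem rat_y5 : ∃ h ∈ G, h * y * h⁻¹ = y ^ (5 : ℤ) :=
  rat_of [0, 0, 1, 0, 0, 1, 1, 0, 0, 0, 1, 1, 0, 0, 1, 0, 0] rep_y 5 rep_y.pow5 (by decide +kernel)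
theorem rat_y7 : ∃ h ∈ G, h * y * h⁻¹ = y ^ (7 : ℤ) :=
  rat_of [0, 1, 1, 0, 0, 1, 1, 0, 0, 1, 1, 0, 0] rep_y 7 rep_y.pow7 (by decide +kernel)

theorem rat_1 (g : Equiv.Perm (Fin 56)) : ∃ h ∈ G, h * g * h⁻¹ = g ^ (1 : ℤ) :=
  ⟨1, G.one_mem, by simp⟩

theorem odd_of {k : ℤ} {n : ℕ} (hn : 2 ∣ n) (h : Int.gcd k n = 1) : k % 2 = 1 := by
  by_contra hc
  have h2 : (2 : ℤ) ∣ k := by omega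
  have h3 : 2 ∣ Int.gcd k n := Int.dvd_gcd h2 (by exact_mod_cast hn)
  rw [h] at h3
  omega

theorem rational : ∀ g ∈ ({x, y, (x * y)⁻¹} : Set (Equiv.Perm (Fin 56))), ∀ k : ℤ,
    Int.gcd k (orderOf g) = 1 → ∃ h ∈ G, h * g * h⁻¹ = g ^ k := by
  rintro g (rfl | rfl | rfl) k hk
  · have hk' := odd_of (by rw [order_x]; norm_num) hk
    rw [← zpow_mod_orderOf, order_x]
    have : k % ((4 : ℕ) : ℤ) = 1 ∨ k % ((4 : ℕ) : ℤ) = 3 := by omega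
    rcases this with h | h <;> rw [h]
    · exact rat_1 _
    · exact rat_x3
  · have hk' := odd_of (by rw [order_y]; norm_num) hk
    rw [← zpow_mod_orderOf, order_y]
    have : k % ((8 : ℕ) : ℤ) = 1 ∨ k % ((8 : ℕ) : ℤ) = 3 ∨ k % ((8 : ℕ) : ℤ) = 5 ∨
      k % ((8 : ℕ) : ℤ) = 7 := by omega
    rcases this with h | h | h | h <;> rw [h]
    · exact rat_1 _
    · exact rat_y3
    · exact rat_y5
    · exact rat_y7
  · have hk' := odd_of (by rw [order_z]) hk
    rw [← zpow_mod_orderOf, order_z]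
    have : k % ((2 : ℕ) : ℤ) = 1 := by omega
    rw [this]
    exact rat_1 _

/-! ### Cycle types -/

theorem cycleType_permOfCycles {n : ℕ} (cs : List (List (Fin n))) (h1 : ∀ c ∈ cs, c.Nodup)
    (h2 : ∀ c ∈ cs, 2 ≤ c.length) (h3 : cs.Pairwise fun a b => ∀ i ∈ a, i ∉ b) :
    (permOfCycles cs).cycleType = (cs.map List.length : List ℕ) := by
  rw [Equiv.Perm.cycleType_eq (σ := permOfCycles cs) (cs.map List.formPerm) rfl]
  · rw [List.map_map]
    congr 1
    apply List.map_congr_left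
    intro c hc
    have hne : ∀ i : Fin n, c ≠ [i] := by
      rintro i rfl
      have := h2 _ hc
      simp at this
    simp only [Function.comp]
    rw [List.support_formPerm_of_nodup c (h1 c hc) hne, List.toFinset_card_of_nodup (h1 c hc)]
  · intro s hs
    obtain ⟨c, hc, rfl⟩ := List.mem_map.1 hs
    exact List.isCycle_formPerm (h1 c hc) (h2 c hc)
  · rw [List.pairwise_map]
    refine List.Pairwise.imp_of_mem ?_ h3
    intro a b ha hb hab
    exact (List.formPerm_disjoint_iff (h1 a ha) (h1 b hb) (h2 a ha) (h2 b hb)).2 (fun i hi hj => hab i hi hj)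

theorem ct_x : x.cycleType = Multiset.replicate 12 4 + Multiset.replicate 2 2 := by
  rw [x, cycleType_permOfCycles _ (by decide +kernel) (by decide +kernel) (by decide +kernel)]
  decide +kernel

theorem ct_y : y.cycleType =
    Multiset.replicate 6 8 + Multiset.replicate 1 4 + Multiset.replicate 2 2 := by
  rw [y, cycleType_permOfCycles _ (by decide +kernel) (by decide +kernel) (by decide +kernel)]
  decide +kernel

def zcyc : List (List (Fin 56)) := [[0, 52], [1, 34], [2, 27], [3, 38], [4, 45], [5, 54], [6, 39], [8, 50], [11, 30], [12, 42], [14, 28], [15, 23], [16, 37], [18, 49], [19, 20], [21, 31], [22, 29], [25, 55], [26, 35], [32, 36], [33, 44], [40, 53], [41, 51], [43, 48], [46, 47]]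

theorem z_eq : (x * y)⁻¹ = permOfCycles zcyc := by
  have h : Rep cz (permOfCycles zcyc) := by unfold Rep; decide +kernel
  exact rep_z.inj h

theorem ct_z : ((x * y)⁻¹).cycleType = Multiset.replicate 25 2 := by
  rw [z_eq, cycleType_permOfCycles _ (by decide +kernel) (by decide +kernel) (by decide +kernel)]
  decide +kernel

theorem ne_alt : G ≠ alternatingGroup (Fin 56) := by
  intro h
  have h1 := card_G
  have h2 := two_mul_nat_card_alternatingGroup (α := Fin 56)
  rw [← h, h1, Nat.card_perm, Nat.card_eq_fintype_card, Fintype.card_fin] at h2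
  revert h2
  decide +kernel

theorem ne_top : G ≠ ⊤ := by
  intro h
  have h1 := card_G
  rw [h, Subgroup.card_top, Nat.card_perm, Nat.card_eq_fintype_card, Fintype.card_fin] at h1
  revert h1
  decide +kernel

theorem noncomm_sub {A : Type} [Group A] {N : Subgroup A} {a b : A} (ha : a ∈ N) (hb : b ∈ N)
    (h : a * b ≠ b * a) : ∃ a b : N, a * b ≠ b * a :=
  ⟨⟨a, ha⟩, ⟨b, hb⟩, fun hc => h (congrArg Subtype.val hc)⟩

theorem noncomm_S : ∃ a b : S, a * b ≠ b * a := noncomm_sub wa_S wb_S not_comm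
end Deg56

open Deg56

theorem nice_triple_deg56_stmt5 :
    IsNice x y (x * y)⁻¹ ∧
    x.cycleType = Multiset.replicate 12 4 + Multiset.replicate 2 2 ∧
    y.cycleType = Multiset.replicate 6 8 + Multiset.replicate 1 4 + Multiset.replicate 2 2 ∧
    ((x * y)⁻¹).cycleType = Multiset.replicate 25 2 ∧
    Nat.card ↥(Subgroup.closure {x, y} : Subgroup (Equiv.Perm (Fin 56))) = 80640 := by
  
  refine ⟨⟨by group, ⟨ne_alt, ne_top⟩, ⟨prim_G.toIsPretransitive, ?_⟩, ?_, ?_, rigid, rational⟩,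
    ct_x, ct_y, ct_z, card_G⟩
  · intro B hB
    exact prim_G.isTrivialBlock_of_isBlock hB
  · exact ⟨S, S_normal, S_simple, noncomm_S, S_centralizer⟩
  · rw [permInd, permInd, permInd, ct_x, ct_y, ct_z]
    decide +kernel
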